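/- Let E be a uniform system of substring equations of length L on a text T of length n (all equation positions lie in {1,…,n}). Fix a block size B ≥ 1 and, for a position p, let pred(p) denote the largest integer of the form 1 + kB (k ≥ 0 an integer) that is at most p. Let N be the number of distinct values pred(p) over all starting positions p of fragments appearing in equations of E, and assume N ≥ 2. Let S be a positive integer with B·(2⌊log₂ N⌋ + 1) ≤ S ≤ L/4. Then there exists a system Ē of at most 3N substring equations on T, each of length between L − 3S and L, such that: (a) if T satisfies E, then T satisfies Ē; and (b) for every integer S' ≥ 0, if T satisfies Ē with shortage S', then T satisfies E with shortage S' + 2S. -/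

import Mathlib

/-!
Group the starting positions into `N` aligned blocks and view every equation as an edge of a
graph on the blocks. An equation between blocks `b` and `b'` says that `T (b + o)` equals
`T (b' + o + δ)` for almost all offsets `o`, with a drift `|δ| ≤ B - 1`.

* `exists_spanner`: a graph on `N < 2 ^ (k + 1)` vertices has a subgraph with at most `2 N` edges in
  which the ends of each original edge are joined by a path of at most `2 k` steps. It is built by
  growing a ball until its next layer no longer more than doubles it, keeping a spanning tree of
  the enlarged ball, and recursing on the complement of the ball.
* `Linked.drift`: a spanner path of length at most `2 k` acts like one equation, with a drift of at
  most `2 k (B - 1)`.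
* Comparing an equation `e` with the spanner path replacing it shows that the text near the source
  block of `e` has a period `x e` with `|x e| ≤ S`. By Fine and Wilf (`HasPer.finset_gcd`), the gcd
  of these numbers over all `e` with source block `b` is again a period near `b`.

The reduced system consists of the spanner equations (at most `2 N`) and one periodicity equation
for each source block (at most `N`). To recover `e`, shift by the multiple `x e` of the period and
then follow the spanner path; both stay in range at the cost of an extra shortage `2 S`.
-/

/-- A substring equation `T[p..q] = T[p'..q']`. -/
structure SubEq where
  p : ℤ
  q : ℤ
  p' : ℤ
  q' : ℤ
deriving DecidableEq

/-- The equation is well-formed: both fragments have the same length. -/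
def SubEq.valid (e : SubEq) : Prop := e.q - e.p = e.q' - e.p'

/-- The (oriented) shift of the equation. -/
def SubEq.shift (e : SubEq) : ℤ := e.p' - e.p

/-- The length of the equation. -/
def SubEq.len (e : SubEq) : ℤ := e.q - e.p + 1

/-- The equation is on a text of length `n`. -/
def SubEq.onText (e : SubEq) (n : ℤ) : Prop :=
  1 ≤ e.p ∧ 1 ≤ e.p' ∧ e.q ≤ n ∧ e.q' ≤ n

/-- `T` satisfies the equation `e` with shortage `S`. -/
def SatS {α : Type*} (T : ℤ → α) (e : SubEq) (S : ℤ) : Prop :=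
  ∀ k : ℤ, e.p + S ≤ k → k ≤ e.q - S → T k = T (k + e.shift)

/-! ### Sparse spanners of logarithmic stretch -/

/-- `Linked H m u v`: there is a walk of at most `m` steps from `u` to `v` along the edges in `H`,
traversed in either direction. -/
inductive Linked {V : Type*} (H : Finset (V × V)) : ℕ → V → V → Prop
  | refl (m : ℕ) (u : V) : Linked H m u u
  | fwd {m : ℕ} {u v w : V} : (u, v) ∈ H → Linked H m v w → Linked H (m + 1) u w
  | bwd {m : ℕ} {u v w : V} : (v, u) ∈ H → Linked H m v w → Linked H (m + 1) u w

namespace Linked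

variable {V : Type*} {H H' : Finset (V × V)} {m m' : ℕ} {u v w : V}

theorem mono (h : Linked H m u v) (hH : H ⊆ H') : Linked H' m u v := by
  induction h with
  | refl m u => exact refl m u
  | fwd e _ ih => exact fwd (hH e) ih
  | bwd e _ ih => exact bwd (hH e) ih

theorem le (h : Linked H m u v) (hm : m ≤ m') : Linked H m' u v := by
  induction h generalizing m' with
  | refl m u => exact refl m' u
  | fwd e _ ih =>
    obtain ⟨c, rfl⟩ : ∃ c, m' = c + 1 := ⟨m' - 1, by omega⟩
    exact fwd e (ih (by omega))
  | bwd e _ ih =>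
    obtain ⟨c, rfl⟩ : ∃ c, m' = c + 1 := ⟨m' - 1, by omega⟩
    exact bwd e (ih (by omega))

theorem trans (h : Linked H m u v) (h' : Linked H m' v w) : Linked H (m + m') u w := by
  induction h with
  | refl m u => exact h'.le (by omega)
  | fwd e _ ih => exact (fwd e (ih h')).le (by omega)
  | bwd e _ ih => exact (bwd e (ih h')).le (by omega)

theorem symm (h : Linked H m u v) : Linked H m v u := by
  induction h with
  | refl m u => exact refl m u
  | fwd e _ ih => exact ih.trans (bwd e (refl 0 _))
  | bwd e _ ih => exact ih.trans (fwd e (refl 0 _))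

end Linked

/-- The ball of radius `i` around `v` in the graph on the vertex set `X` with edge set `A`,
orientations being ignored. -/
def ball {V : Type*} [DecidableEq V] (A : Finset (V × V)) (X : Finset V) (v : V) : ℕ → Finset V
  | 0 => {v}
  | i + 1 => ball A X v i ∪ X.filter fun w => ∃ u ∈ ball A X v i, (u, w) ∈ A ∨ (w, u) ∈ A

theorem ball_subset {V : Type*} [DecidableEq V] (A : Finset (V × V)) (X : Finset V) {v : V}
    (hv : v ∈ X) (i : ℕ) : ball A X v i ⊆ X := by
  induction i with
  | zero => simpa [ball] using hv
  | succ i ih => exact Finset.union_subset ih (Finset.filter_subset _ _)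

/-- A breadth-first search tree of a ball. -/
theorem exists_tree {V : Type*} [DecidableEq V] (A : Finset (V × V)) (X : Finset V) (v : V)
    (i : ℕ) : ∃ H ⊆ A, H.card + 1 ≤ (ball A X v i).card ∧
      ∀ w ∈ ball A X v i, Linked H i v w := by
  induction i with
  | zero =>
    refine ⟨∅, by simp, by simp [ball], ?_⟩
    intro w hw
    obtain rfl : w = v := by simpa [ball] using hw
    exact Linked.refl _ _
  | succ i ih =>
    obtain ⟨H, hHA, hc, hl⟩ := ih
    set D := ball A X v (i + 1) \ ball A X v i with hD
    have key : ∀ w, ∃ a : V × V, w ∈ D → a ∈ A ∧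
        ∃ u ∈ ball A X v i, a = (u, w) ∨ a = (w, u) := by
      intro w
      by_cases hw : w ∈ D
      · simp only [hD, ball, Finset.mem_sdiff, Finset.mem_union, Finset.mem_filter] at hw
        obtain ⟨h | ⟨_, u, hu, h | h⟩, hn⟩ := hw
        · exact absurd h hn
        · exact ⟨(u, w), fun _ => ⟨h, u, hu, Or.inl rfl⟩⟩
        · exact ⟨(w, u), fun _ => ⟨h, u, hu, Or.inr rfl⟩⟩
      · exact ⟨(w, w), fun h => absurd h hw⟩
    choose f hf using key
    refine ⟨H ∪ D.image f, ?_, ?_, ?_⟩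
    · refine Finset.union_subset hHA ?_
      intro a ha
      obtain ⟨w, hw, rfl⟩ := Finset.mem_image.1 ha
      exact (hf w hw).1
    · have h1 := Finset.card_union_le H (D.image f)
      have h2 : (D.image f).card ≤ D.card := Finset.card_image_le
      have h3 : D.card + (ball A X v i).card = (ball A X v (i + 1)).card :=
        Finset.card_sdiff_add_card_eq_card Finset.subset_union_left
      omega
    · intro w hw
      by_cases hwi : w ∈ ball A X v i
      · exact ((hl w hwi).mono Finset.subset_union_left).le (by omega)
      · have hwD : w ∈ D := Finset.mem_sdiff.2 ⟨hw, hwi⟩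
        obtain ⟨_, u, hu, h⟩ := hf w hwD
        have hmem : f w ∈ H ∪ D.image f :=
          Finset.mem_union_right _ (Finset.mem_image_of_mem f hwD)
        refine ((hl u hu).mono Finset.subset_union_left).trans ?_
        rcases h with h | h
        · exact .fwd (h ▸ hmem) (.refl 0 w)
        · exact .bwd (h ▸ hmem) (.refl 0 w)

/-- A graph on fewer than `2 ^ (k + 1)` vertices has a `2 k`-spanner with at most twice as many
edges as vertices. -/
theorem exists_spanner {V : Type*} [DecidableEq V] (k : ℕ) (X : Finset V) (A : Finset (V × V))
    (hA : ∀ a ∈ A, a.1 ∈ X ∧ a.2 ∈ X) (hX : X.card < 2 ^ (k + 1)) :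
    ∃ H ⊆ A, H.card ≤ 2 * X.card ∧ ∀ a ∈ A, Linked H (2 * k) a.1 a.2 := by
  induction hn : X.card using Nat.strong_induction_on generalizing X A with
  | _ c ih =>
  subst hn
  rcases X.eq_empty_or_nonempty with rfl | ⟨v, hv⟩
  · exact ⟨∅, by simp, by simp, fun a ha => by simpa using hA a ha⟩
  by_cases hgood : ∃ i < k, (ball A X v (i + 1)).card ≤ 2 * (ball A X v i).card
  · obtain ⟨i, hik, hi⟩ := hgood
    obtain ⟨H, hHA, hHc, hHl⟩ := exists_tree A X v (i + 1)
    have hsub := ball_subset A X hv i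
    have hpos : 0 < (ball A X v i).card := by
      by_contra h0
      omega
    have hcard : (X \ ball A X v i).card + (ball A X v i).card = X.card :=
      Finset.card_sdiff_add_card_eq_card hsub
    obtain ⟨H', hH'A, hH'c, hH'l⟩ := ih (X \ ball A X v i).card (by omega) (X \ ball A X v i)
      (A.filter fun a => a.1 ∉ ball A X v i ∧ a.2 ∉ ball A X v i)
      (by
        intro a ha
        obtain ⟨ha, h1, h2⟩ := Finset.mem_filter.1 ha
        exact ⟨Finset.mem_sdiff.2 ⟨(hA a ha).1, h1⟩, Finset.mem_sdiff.2 ⟨(hA a ha).2, h2⟩⟩)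
      (by omega) rfl
    refine ⟨H ∪ H', Finset.union_subset hHA (hH'A.trans (Finset.filter_subset _ _)), ?_, ?_⟩
    · have := Finset.card_union_le H H'
      omega
    · intro a ha
      -- An edge meeting the ball has both ends in the ball of radius `i + 1`.
      have inball : a.1 ∈ ball A X v (i + 1) → a.2 ∈ ball A X v (i + 1) →
          Linked (H ∪ H') (2 * k) a.1 a.2 := fun h1 h2 =>
        (((hHl _ h1).symm.trans (hHl _ h2)).mono Finset.subset_union_left).le (by omega)
      by_cases h1 : a.1 ∈ ball A X v i
      · exact inball (Finset.mem_union_left _ h1) (Finset.mem_union_right _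
          (Finset.mem_filter.2 ⟨(hA a ha).2, a.1, h1, Or.inl ha⟩))
      by_cases h2 : a.2 ∈ ball A X v i
      · exact inball (Finset.mem_union_right _
          (Finset.mem_filter.2 ⟨(hA a ha).1, a.2, h2, Or.inr ha⟩)) (Finset.mem_union_left _ h2)
      exact (hH'l a (Finset.mem_filter.2 ⟨ha, h1, h2⟩)).mono Finset.subset_union_right
  · -- If every layer more than doubles the ball, the ball of radius `k` is everything.
    push Not at hgood
    have grow : ∀ i ≤ k, 2 ^ (i + 1) ≤ (ball A X v i).card + 1 := by
      intro i
      induction i with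
      | zero => intro _; simp [ball]
      | succ i ihi =>
        intro hi
        have := ihi (by omega)
        have := hgood i (by omega)
        rw [pow_succ]
        omega
    have hall : ball A X v k = X := by
      apply Finset.eq_of_subset_of_card_le (ball_subset A X hv k)
      have := grow k le_rfl
      omega
    obtain ⟨H, hHA, hHc, hHl⟩ := exists_tree A X v k
    rw [hall] at hHc hHl
    exact ⟨H, hHA, by omega, fun a ha =>
      ((hHl _ (hA a ha).1).symm.trans (hHl _ (hA a ha).2)).le (by omega)⟩

/-! ### Periods of an interval of the text -/

/-- `T` restricted to the interval `[lo, hi]` has period `x`. -/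
def HasPer {α : Type*} (T : ℤ → α) (lo hi : ℤ) (x : ℕ) : Prop :=
  ∀ j : ℤ, lo ≤ j → j + x ≤ hi → T j = T (j + x)

namespace HasPer

variable {α : Type*} {T : ℤ → α} {lo hi : ℤ}

theorem mul {x : ℕ} (h : HasPer T lo hi x) (m : ℕ) : HasPer T lo hi (x * m) := by
  induction m with
  | zero => intro j _ _; simp
  | succ m ih =>
    intro j h1 h2
    push_cast [mul_add] at h2
    have h0 : (0 : ℤ) ≤ (x : ℤ) * m := by positivity
    rw [ih j h1 (by push_cast; omega), h _ (by push_cast; omega) (by push_cast; omega)]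
    congr 1
    push_cast
    ring

theorem of_dvd {x : ℕ} (h : HasPer T lo hi x) {y : ℤ} (hxy : (x : ℤ) ∣ y) {j : ℤ}
    (h1 : lo ≤ j) (h2 : j ≤ hi) (h3 : lo ≤ j + y) (h4 : j + y ≤ hi) : T j = T (j + y) := by
  obtain ⟨c, hc⟩ := Int.natCast_dvd.1 hxy
  have hm := h.mul c
  rw [← hc] at hm
  rcases le_total 0 y with hy | hy
  · have := hm j h1 (by omega)
    rwa [Int.natAbs_of_nonneg hy] at this
  · have := hm (j + y) h3 (by omega)
    rw [this]
    congr 1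
    omega

/-- The weak form of the Fine–Wilf theorem, by the subtractive Euclidean algorithm. -/
theorem gcd {x y : ℕ} (hx : HasPer T lo hi x) (hy : HasPer T lo hi y)
    (hlen : (x : ℤ) + y ≤ hi - lo + 1) : HasPer T lo hi (Nat.gcd x y) := by
  induction hs : x + y using Nat.strong_induction_on generalizing x y with
  | _ s ih =>
  wlog hxy : x ≤ y generalizing x y
  · rw [Nat.gcd_comm]
    exact this hy hx (by omega) (by omega) (by omega)
  rcases Nat.eq_zero_or_pos x with rfl | hx0
  · simpa using hy
  obtain ⟨d, rfl⟩ := Nat.exists_eq_add_of_le hxy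
  have hd : HasPer T lo hi d := by
    intro j h1 h2
    by_cases hj : j + x + d ≤ hi
    · rw [hy j h1 (by push_cast; omega), hx (j + d) (by omega) (by omega)]
      congr 1
      push_cast
      ring
    · have e1 := hx (j - x) (by push_cast at hlen; omega) (by omega)
      have e2 := hy (j - x) (by push_cast at hlen; omega) (by push_cast; omega)
      rw [sub_add_cancel] at e1
      rw [← e1, e2]
      congr 1
      push_cast
      ring
  have := ih (x + d) (by omega) hx hd (by push_cast at hlen; omega) rfl
  simpa using this

/-- The gcd of finitely many periods, each at most half the length of the interval, is a period. -/
theorem finset_gcd {ι : Type*} (F : Finset ι) (x : ι → ℕ) (M : ℕ)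
    (hM : ∀ i ∈ F, x i ≤ M) (hlen : 2 * (M : ℤ) ≤ hi - lo + 1)
    (h : ∀ i ∈ F, HasPer T lo hi (x i)) : HasPer T lo hi (F.gcd x) ∧ F.gcd x ≤ M := by
  classical
  induction F using Finset.induction_on with
  | empty => exact ⟨fun j _ _ => by simp, by simp⟩
  | insert a F ha ih =>
    obtain ⟨h1, h2⟩ := ih (fun i hi => hM i (Finset.mem_insert_of_mem hi))
      (fun i hi => h i (Finset.mem_insert_of_mem hi))
    have h3 := hM a (Finset.mem_insert_self a F)
    rw [Finset.gcd_insert]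
    refine ⟨(h a (Finset.mem_insert_self a F)).gcd h1 (by omega), ?_⟩
    rcases Nat.eq_zero_or_pos (x a) with h0 | h0
    · simpa [h0] using h2
    · exact (Nat.gcd_le_left _ h0).trans h3

end HasPer

/-! ### Walks in the block graph -/

/-- The start of the block of length `B` containing `p`. -/
def blk (B p : ℤ) : ℤ := 1 + B * ((p - 1) / B)

theorem blk_le {B : ℤ} (hB : 1 ≤ B) (p : ℤ) : blk B p ≤ p ∧ p ≤ blk B p + (B - 1) := by
  have h1 := Int.emod_nonneg (p - 1) (b := B) (by omega)
  have h2 := Int.emod_lt_of_pos (p - 1) (b := B) (by omega)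
  have h3 := Int.mul_ediv_add_emod (p - 1) B
  unfold blk
  omega

theorem one_le_blk {B p : ℤ} (hB : 1 ≤ B) (hp : 1 ≤ p) : 1 ≤ blk B p := by
  have : 0 ≤ B * ((p - 1) / B) := mul_nonneg (by omega) (Int.ediv_nonneg (by omega) (by omega))
  unfold blk
  omega

/-- One equation, read on offsets relative to its two blocks. -/
theorem SatS.offset {α : Type*} {T : ℤ → α} {L B S' : ℤ} {e : SubEq}
    (he : e.len = L) (hT : SatS T e S') {o : ℤ}
    (h1 : S' + (e.p - blk B e.p) ≤ o) (h2 : o ≤ L - 1 - S' + (e.p - blk B e.p)) :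
    T (blk B e.p + o) =
      T (blk B e.p' + o + ((e.p' - blk B e.p') - (e.p - blk B e.p))) := by
  unfold SubEq.len at he
  rw [hT (blk B e.p + o) (by omega) (by omega)]
  congr 1
  unfold SubEq.shift
  ring

/-- A walk of at most `m` steps whose edges are realised by equations acts as a single equation
with drift at most `m * (B - 1)`. The drift does not depend on the shortage. -/
theorem Linked.drift {α : Type*} (T : ℤ → α) {L B : ℤ} (hB : 1 ≤ B)
    {H : Finset (ℤ × ℤ)} (f : ℤ × ℤ → SubEq)
    (hf : ∀ a ∈ H, (f a).len = L ∧ blk B (f a).p = a.1 ∧ blk B (f a).p' = a.2)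
    {m : ℕ} {u v : ℤ} (h : Linked H m u v) :
    ∃ δ : ℤ, |δ| ≤ m * (B - 1) ∧ ∀ S' : ℤ, (∀ a ∈ H, SatS T (f a) S') →
      ∀ o : ℤ, S' + m * (B - 1) ≤ o → o ≤ L - 1 - S' - m * (B - 1) →
        T (u + o) = T (v + o + δ) := by
  induction h with
  | refl m u => exact ⟨0, by rw [abs_zero]; exact mul_nonneg (by positivity) (by omega), by simp⟩
  | @fwd m u v w hmem _ ih =>
    obtain ⟨δ, hδ, ih⟩ := ih
    obtain ⟨hl, hu, hv⟩ := hf _ hmem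
    set e := f (u, v)
    simp only at hu hv
    have b1 := blk_le hB e.p
    have b2 := blk_le hB e.p'
    have hm : (0 : ℤ) ≤ m * (B - 1) := mul_nonneg (by positivity) (by omega)
    have hexp : ((m + 1 : ℕ) : ℤ) * (B - 1) = m * (B - 1) + (B - 1) := by push_cast; ring
    rw [abs_le] at hδ
    rw [hexp]
    refine ⟨δ + ((e.p' - v) - (e.p - u)), abs_le.2 ⟨by omega, by omega⟩, ?_⟩
    intro S' hS o h1 h2
    have := (hS _ hmem).offset (B := B) hl (o := o) (by omega) (by omega)
    rw [hu, hv] at this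
    rw [this, add_assoc v, ih S' hS _ (by omega) (by omega)]
    congr 1
    ring
  | @bwd m u v w hmem _ ih =>
    obtain ⟨δ, hδ, ih⟩ := ih
    obtain ⟨hl, hu, hv⟩ := hf _ hmem
    set e := f (v, u)
    simp only at hu hv
    have b1 := blk_le hB e.p
    have b2 := blk_le hB e.p'
    have hm : (0 : ℤ) ≤ m * (B - 1) := mul_nonneg (by positivity) (by omega)
    have hexp : ((m + 1 : ℕ) : ℤ) * (B - 1) = m * (B - 1) + (B - 1) := by push_cast; ring
    rw [abs_le] at hδ
    rw [hexp]
    refine ⟨δ + ((e.p - v) - (e.p' - u)), abs_le.2 ⟨by omega, by omega⟩, ?_⟩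
    intro S' hS o h1 h2
    have := (hS _ hmem).offset (B := B) hl (o := o + ((e.p - v) - (e.p' - u))) (by omega) (by omega)
    rw [hu, hv] at this
    have h3 := ih S' hS (o + ((e.p - v) - (e.p' - u))) (by omega) (by omega)
    rw [this] at h3
    convert h3 using 2 <;> ring

/-! ### The reduction -/

/-- Lemma 18: reducing a uniform system of equations of length `L` via a spanner
of the block graph. Here `pred(p) = 1 + B·⌊(p-1)/B⌋` is the largest aligned
position `1 + kB ≤ p`, and `N` is the number of distinct values `pred(p)` over
all starting positions of equations in `E`. -/
theorem uniform_system_reduction {α : Type*} (T : ℤ → α)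
    (n L B S : ℤ) (E : Finset SubEq)
    (hE : ∀ e ∈ E, e.valid ∧ e.onText n ∧ e.len = L)
    (hB : 1 ≤ B)
    (N : ℕ)
    (hN : N = ((E.image fun e => 1 + B * ((e.p - 1) / B)) ∪
               (E.image fun e => 1 + B * ((e.p' - 1) / B))).card)
    (hN2 : 2 ≤ N)
    (hS0 : 0 < S)
    (hSlow : B * (2 * (Nat.log 2 N : ℤ) + 1) ≤ S)
    (hShigh : (S : ℚ) ≤ (L : ℚ) / 4) :
    ∃ Ebar : Finset SubEq,
      (Ebar.card : ℤ) ≤ 3 * (N : ℤ) ∧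
      (∀ e ∈ Ebar, e.valid ∧ e.onText n ∧ L - 3 * S ≤ e.len ∧ e.len ≤ L) ∧
      ((∀ e ∈ E, SatS T e 0) → ∀ e ∈ Ebar, SatS T e 0) ∧
      (∀ S' : ℤ, 0 ≤ S' → (∀ e ∈ Ebar, SatS T e S') →
        ∀ e ∈ E, SatS T e (S' + 2 * S)) := by
  classical
  set k := Nat.log 2 N with hk
  have hNk : N < 2 ^ (k + 1) := Nat.lt_pow_succ_log_self (by norm_num) N
  have hS4 : 4 * S ≤ L := by
    have h : (4 * S : ℚ) ≤ L := by linarith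
    exact_mod_cast h
  -- The largest total drift of a spanner path together with one further equation.
  have hdr : ((2 * k : ℕ) : ℤ) * (B - 1) + (B - 1) ≤ S := by
    have h0 : (0 : ℤ) ≤ k := by positivity
    push_cast
    nlinarith
  set K := ((2 * k : ℕ) : ℤ) * (B - 1) with hK
  have hK0 : 0 ≤ K := mul_nonneg (by positivity) (by omega)
  set X := (E.image fun e => blk B e.p) ∪ (E.image fun e => blk B e.p') with hX
  have hNX : N = X.card := hN
  clear_value k K X
  have hcov : ∀ a ∈ E.image fun e => (blk B e.p, blk B e.p'), a.1 ∈ X ∧ a.2 ∈ X := by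
    intro a ha
    obtain ⟨e, he, rfl⟩ := Finset.mem_image.1 ha
    rw [hX]
    exact ⟨Finset.mem_union_left _ (Finset.mem_image.2 ⟨e, he, rfl⟩),
      Finset.mem_union_right _ (Finset.mem_image.2 ⟨e, he, rfl⟩)⟩
  have hXk : X.card < 2 ^ (k + 1) := hNX ▸ hNk
  clear hN
  obtain ⟨H, hHA, hHc, hHl⟩ := exists_spanner k X _ hcov hXk
  have hex : ∀ a : ℤ × ℤ, ∃ e : SubEq, a ∈ H →
      e ∈ E ∧ (blk B e.p, blk B e.p') = a := by
    intro a
    by_cases ha : a ∈ H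
    · obtain ⟨e, he, h⟩ := Finset.mem_image.1 (hHA ha)
      exact ⟨e, fun _ => ⟨he, h⟩⟩
    · exact ⟨⟨0, 0, 0, 0⟩, fun h => absurd h ha⟩
  choose f hf using hex
  have hf' : ∀ a ∈ H, (f a).len = L ∧ blk B (f a).p = a.1 ∧ blk B (f a).p' = a.2 := by
    intro a ha
    obtain ⟨h1, h2⟩ := hf a ha
    exact ⟨(hE _ h1).2.2, congrArg Prod.fst h2, congrArg Prod.snd h2⟩
  have hδex : ∀ e : SubEq, ∃ δ : ℤ, e ∈ E → |δ| ≤ K ∧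
      ∀ S' : ℤ, (∀ a ∈ H, SatS T (f a) S') → ∀ o : ℤ, S' + K ≤ o → o ≤ L - 1 - S' - K →
        T (blk B e.p + o) = T (blk B e.p' + o + δ) := by
    intro e
    by_cases he : e ∈ E
    · obtain ⟨δ, h⟩ := (hHl _ (Finset.mem_image.2 ⟨e, he, rfl⟩)).drift T hB f hf'
      rw [← hK] at h
      exact ⟨δ, fun _ => h⟩
    · exact ⟨0, fun h => absurd h he⟩
  choose δ hδ using hδex
  -- Following the spanner path of `e` and then `e` backwards amounts to a shift by `x e`.
  obtain ⟨x, hx⟩ : ∃ x : SubEq → ℤ, ∀ e,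
      x e = δ e + (e.p - blk B e.p) - (e.p' - blk B e.p') := ⟨_, fun _ => rfl⟩
  have hxS : ∀ e ∈ E, (x e).natAbs ≤ S.toNat := by
    intro e he
    have h1 := (hδ e he).1
    have b1 := blk_le hB e.p
    have b2 := blk_le hB e.p'
    rw [abs_le] at h1
    have hxe := hx e
    omega
  obtain ⟨g, hg⟩ : ∃ g : ℤ → ℕ, ∀ b,
      g b = (E.filter fun e => blk B e.p = b).gcd fun e => (x e).natAbs := ⟨_, fun _ => rfl⟩
  have hgdvd : ∀ e ∈ E, ((g (blk B e.p) : ℕ) : ℤ) ∣ x e := by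
    intro e he
    rw [Int.natCast_dvd, hg]
    exact Finset.gcd_dvd (f := fun e => (x e).natAbs) (Finset.mem_filter.2 ⟨he, rfl⟩)
  -- A constant text has every period, so the bound on `g` follows from `finset_gcd` as well.
  have hgS : ∀ b, (g b : ℤ) ≤ S := by
    intro b
    have := (HasPer.finset_gcd (T := fun _ : ℤ => ()) (lo := 0) (hi := 2 * S)
      (E.filter fun e => blk B e.p = b) (fun e => (x e).natAbs) S.toNat
      (fun e he => hxS e (Finset.mem_filter.1 he).1) (by omega) (fun _ _ _ _ _ => rfl)).2
    rw [← hg] at this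
    omega
  let c : ℤ → SubEq := fun b =>
    ⟨b + S, b + L - 1 - S - g b, b + S + g b, b + L - 1 - S⟩
  refine ⟨H.image f ∪ (E.image fun e => blk B e.p).image c, ?_, ?_, ?_, ?_⟩
  · have h1 := Finset.card_union_le (H.image f) ((E.image fun e => blk B e.p).image c)
    have h2 : (H.image f).card ≤ H.card := Finset.card_image_le
    have h3 : ((E.image fun e => blk B e.p).image c).card ≤ (E.image fun e => blk B e.p).card :=
      Finset.card_image_le
    have h4 : (E.image fun e => blk B e.p).card ≤ X.card :=
      Finset.card_le_card (hX ▸ Finset.subset_union_left)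
    omega
  · intro e he
    rcases Finset.mem_union.1 he with he | he
    · obtain ⟨a, ha, rfl⟩ := Finset.mem_image.1 he
      obtain ⟨h1, h2, h3⟩ := hE _ (hf a ha).1
      exact ⟨h1, h2, by omega, by omega⟩
    · obtain ⟨b, hb, rfl⟩ := Finset.mem_image.1 he
      obtain ⟨e, heE, rfl⟩ := Finset.mem_image.1 hb
      obtain ⟨h1, ⟨h2, h3, h4, h5⟩, h6⟩ := hE e heE
      have b1 := blk_le hB e.p
      have b2 := one_le_blk hB h2
      have b3 := hgS (blk B e.p)
      unfold SubEq.len at h6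
      simp only [c, SubEq.valid, SubEq.onText, SubEq.len]
      exact ⟨by omega, ⟨by omega, by omega, by omega, by omega⟩, by omega, by omega⟩
  · intro hT e he
    rcases Finset.mem_union.1 he with he | he
    · obtain ⟨a, ha, rfl⟩ := Finset.mem_image.1 he
      exact hT _ (hf a ha).1
    · obtain ⟨b, hb, rfl⟩ := Finset.mem_image.1 he
      have hper : HasPer T (b + S) (b + L - 1 - S) (g b) := by
        rw [hg]
        refine (HasPer.finset_gcd _ _ S.toNat
          (fun e he => hxS e (Finset.mem_filter.1 he).1) (by omega) ?_).1
        intro e he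
        obtain ⟨heE, rfl⟩ := Finset.mem_filter.1 he
        have b1 := blk_le hB e.p
        have b2 := blk_le hB e.p'
        obtain ⟨d1, d2⟩ := hδ e heE
        rw [abs_le] at d1
        have hxe := hx e
        have hshift : ∀ o : ℤ, S ≤ o → o ≤ L - 1 - S →
            T (blk B e.p + o) = T (blk B e.p + o + x e) := by
          intro o o1 o2
          rw [d2 0 (fun a ha => hT _ (hf a ha).1) o (by omega) (by omega), add_assoc _ o (x e),
            (hT e heE).offset (B := B) (hE e heE).2.2 (o := o + x e)
              (by omega) (by omega)]
          congr 1
          rw [hx]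
          ring
        intro j j1 j2
        rcases le_total 0 (x e) with h0 | h0
        · have := hshift (j - blk B e.p) (by omega) (by omega)
          rw [add_sub_cancel] at this
          rwa [Int.natAbs_of_nonneg h0]
        · have := hshift (j + (x e).natAbs - blk B e.p) (by omega) (by omega)
          rw [add_sub_cancel] at this
          rw [this]
          congr 1
          omega
      intro j j1 j2
      simp only [c, SubEq.shift] at j1 j2 ⊢
      rw [hper j (by omega) (by omega)]
      congr 1
      ring
  · intro S' hS' hT e he j j1 j2
    have b1 := blk_le hB e.p
    have b2 := blk_le hB e.p'
    obtain ⟨d1, d2⟩ := hδ e he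
    rw [abs_le] at d1
    have hxe := hx e
    have hlen := (hE e he).2.2
    unfold SubEq.len at hlen
    have hper : HasPer T (blk B e.p + S + S') (blk B e.p + L - 1 - S - S') (g (blk B e.p)) := by
      intro i i1 i2
      have := hT (c (blk B e.p)) (Finset.mem_union_right _ (Finset.mem_image_of_mem _
        (Finset.mem_image.2 ⟨e, he, rfl⟩))) i
        (by simp only [c]; omega) (by simp only [c]; omega)
      rw [this]
      congr 1
      simp only [c, SubEq.shift]
      ring
    have s1 := hper.of_dvd (y := -x e) (j := j) ((hgdvd e he).neg_right)
      (by omega) (by omega) (by omega) (by omega)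
    have s2 := d2 S' (fun a ha => hT _ (Finset.mem_union_left _ (Finset.mem_image_of_mem f ha)))
      (j - x e - blk B e.p) (by omega) (by omega)
    rw [s1, show j + -x e = blk B e.p + (j - x e - blk B e.p) by ring, s2]
    congr 1
    simp only [hx, SubEq.shift]
    ring
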